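/- For every positive integer k, every integer r ≥ 0, and all w, w′ ∈ ℝ² with 0 < |w − w′| ≤ 2·2^{−kr}, one has k·log 2 · ∑_{j=r}^∞ A(w, w′; 2^{−kj}) ≤ log( 2^{−kr} / |w − w′| ) + 6k. -/

import Mathlib

/-!
Each term satisfies `A ≤ 1`, and `A(w, w'; R) = 0` as soon as `2R ≤ |w - w'|`, since the two balls
are then disjoint. With `L = log (2 * 2^(-kr) / |w - w'|) ≥ 0`, the term of index `j` vanishes once
`j * (k log 2) ≥ L`, so at most `⌈L / (k log 2)⌉ ≤ L / (k log 2) + 1` terms are nonzero. Hence the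
left-hand side is at most `L + k log 2 = log (2^(-kr) / |w - w'|) + (k + 1) log 2`, and
`(k + 1) log 2 ≤ 6k`.
-/

open MeasureTheory

/-- `A(x,y;R)`: normalized area of intersection of two balls of radius `R`. -/
noncomputable def ballA (x y : EuclideanSpace ℝ (Fin 2)) (R : ℝ) : ℝ :=
  (volume (Metric.ball x R ∩ Metric.ball y R)).toReal / (volume (Metric.ball x R)).toReal

lemma ballA_le_one (x y : EuclideanSpace ℝ (Fin 2)) (R : ℝ) : ballA x y R ≤ 1 := by
  unfold ballA
  refine div_le_one_of_le₀ ?_ ENNReal.toReal_nonneg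
  exact ENNReal.toReal_mono measure_ball_lt_top.ne (measure_mono Set.inter_subset_left)

lemma ballA_eq_zero (x y : EuclideanSpace ℝ (Fin 2)) (R : ℝ) (h : R + R ≤ dist x y) :
    ballA x y R = 0 := by
  unfold ballA
  rw [(Metric.ball_disjoint_ball h).inter_eq]
  simp

theorem stmt17 (k : ℕ) (hk : 0 < k) (r : ℕ) (w w' : EuclideanSpace ℝ (Fin 2))
    (h1 : 0 < dist w w') (h2 : dist w w' ≤ 2 * (2:ℝ) ^ (-(k * r : ℤ))) :
    (k : ℝ) * Real.log 2 * ∑' j : ℕ, ballA w w' ((2:ℝ) ^ (-(k * (r + j) : ℤ)))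
      ≤ Real.log ((2:ℝ) ^ (-(k * r : ℤ)) / dist w w') + 6 * k := by
  have hk1 : (1 : ℝ) ≤ k := by exact_mod_cast hk
  have hlog : 0 < Real.log 2 := Real.log_pos (by norm_num)
  have hlog1 : Real.log 2 ≤ 1 := by linarith [Real.log_two_lt_d9]
  have hc : 0 < (k : ℝ) * Real.log 2 := by positivity
  have hρ : (0 : ℝ) < (2:ℝ) ^ (-(k * r : ℤ)) := by positivity
  have e1 : Real.log ((2:ℝ) ^ (-(k * r : ℤ)) / dist w w')
      = -(k * r) * Real.log 2 - Real.log (dist w w') := by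
    rw [Real.log_div hρ.ne' h1.ne', Real.log_zpow]
    push_cast
    ring
  set L : ℝ := Real.log 2 + Real.log ((2:ℝ) ^ (-(k * r : ℤ)) / dist w w') with hL
  have hL0 : 0 ≤ L := by
    have := Real.log_le_log h1 h2
    rw [Real.log_mul two_ne_zero hρ.ne'] at this
    rw [hL, Real.log_div hρ.ne' h1.ne']
    linarith
  set N : ℕ := ⌈L / (k * Real.log 2)⌉₊ with hN
  have hzero : ∀ j ∉ Finset.range N, ballA w w' ((2:ℝ) ^ (-(k * (r + j) : ℤ))) = 0 := by
    intro j hj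
    apply ballA_eq_zero
    have hj1 : L / (k * Real.log 2) ≤ j := by
      refine (Nat.le_ceil _).trans ?_
      exact_mod_cast not_lt.mp (fun h => hj (Finset.mem_range.mpr h))
    rw [div_le_iff₀ hc, hL, e1] at hj1
    have hR : (0 : ℝ) < (2:ℝ) ^ (-(k * (r + j) : ℤ)) := by positivity
    rw [← two_mul, ← Real.log_le_log_iff (by positivity) h1, Real.log_mul two_ne_zero hR.ne',
      Real.log_zpow]
    push_cast
    linarith
  have hsum : ∑' j : ℕ, ballA w w' ((2:ℝ) ^ (-(k * (r + j) : ℤ))) ≤ N := by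
    rw [tsum_eq_sum hzero]
    refine (Finset.sum_le_card_nsmul _ _ 1 fun j _ => ballA_le_one _ _ _).trans ?_
    simp
  have hNle : (N : ℝ) ≤ L / (k * Real.log 2) + 1 := (Nat.ceil_lt_add_one (by positivity)).le
  calc _ ≤ (k : ℝ) * Real.log 2 * (L / (k * Real.log 2) + 1) := by
        gcongr
        exact hsum.trans hNle
    _ = L + k * Real.log 2 := by field_simp
    _ ≤ _ := by
        rw [hL]
        nlinarith
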